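/- Fix integers n, k ≥ 1, and let A be a connection form on ℝⁿ with curvature F. The following are equivalent: (i) for every smooth Φ : ℝⁿ → ℝᵏ one has M^D(DΦ) = 0 and for every smooth ℝᵏ-valued 1-form ψ one has Σ_b D_b((M^D ψ)_b) = 0 (i.e., the sequence E⁰ → E¹ → E₁ → E₀ given by d^D, M^D, δ^D is a complex); (ii) the Yang–Mills equation Σ_a (∂_a F_{ab} + A_a F_{ab} − F_{ab} A_a)(x) = 0 holds for every index b and every point x. (Flat-chart form of the main assertion of Theorem 3.2.) -/

import Mathlib

noncomputable section

/-- Points of `ℝⁿ`. -/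
abbrev Vec (n : ℕ) := Fin n → ℝ

/-- Real `k × k` matrices, as plain functions. -/
abbrev Mat (k : ℕ) := Fin k → Fin k → ℝ

/-- Matrix product. -/
def matMul {k : ℕ} (M N : Mat k) : Mat k := fun i j => ∑ l, M i l * N l j

/-- Matrix acting on a vector. -/
def matVec {k : ℕ} (M : Mat k) (v : Fin k → ℝ) : Fin k → ℝ := fun i => ∑ j, M i j * v j

/-- The identity matrix. -/
def idMat (k : ℕ) : Mat k := fun i j => if i = j then 1 else 0

/-- Partial derivative `∂_a f` in the `a`-th coordinate direction. -/
def pd {n : ℕ} {E : Type*} [NormedAddCommGroup E] [NormedSpace ℝ E]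
    (a : Fin n) (f : Vec n → E) (x : Vec n) : E :=
  fderiv ℝ f x (Pi.single a 1)

/-- The coupled covariant derivative `D_a φ = ∂_a φ + A_a φ` on `ℝᵏ`-valued maps. -/
def Dv {n k : ℕ} (A : Fin n → Vec n → Mat k) (a : Fin n)
    (φ : Vec n → Fin k → ℝ) (x : Vec n) : Fin k → ℝ :=
  pd a φ x + matVec (A a x) (φ x)

/-- The covariant derivative `D_a S = ∂_a S + A_a S − S A_a` on matrix-valued maps. -/
def Dm {n k : ℕ} (A : Fin n → Vec n → Mat k) (a : Fin n)
    (S : Vec n → Mat k) (x : Vec n) : Mat k :=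
  pd a S x + matMul (A a x) (S x) - matMul (S x) (A a x)

/-- The curvature `F_{ab} = ∂_a A_b − ∂_b A_a + A_a A_b − A_b A_a` of a connection form. -/
def curv {n k : ℕ} (A : Fin n → Vec n → Mat k) (a b : Fin n) (x : Vec n) : Mat k :=
  pd a (A b) x - pd b (A a) x + matMul (A a x) (A b x) - matMul (A b x) (A a x)

/-- The middle operator `(M^D ψ)_b = −Σ_a D_a(D_a ψ_b − D_b ψ_a) − Σ_a F_{ba} ψ_a`
of the Yang–Mills detour sequence, on `ℝᵏ`-valued 1-forms. -/
def MD {n k : ℕ} (A : Fin n → Vec n → Mat k) (ψ : Fin n → Vec n → Fin k → ℝ)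
    (b : Fin n) (x : Vec n) : Fin k → ℝ :=
  -(∑ a, Dv A a (fun y => Dv A a (ψ b) y - Dv A b (ψ a) y) x)
    - ∑ a, matVec (curv A b a x) (ψ a x)

theorem matVec_add {k : ℕ} (M : Mat k) (v w : Fin k → ℝ) :
    matVec M (v + w) = matVec M v + matVec M w := by
  ext i; simp [matVec, mul_add, Finset.sum_add_distrib]

theorem matVec_neg {k : ℕ} (M : Mat k) (v : Fin k → ℝ) :
    matVec M (-v) = -matVec M v := by
  ext i; simp [matVec]

theorem matVec_sub {k : ℕ} (M : Mat k) (v w : Fin k → ℝ) :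
    matVec M (v - w) = matVec M v - matVec M w := by
  ext i; simp [matVec, mul_sub]

theorem matVec_zero {k : ℕ} (M : Mat k) : matVec M 0 = 0 := by
  ext i; simp [matVec]

theorem add_matVec {k : ℕ} (M N : Mat k) (v : Fin k → ℝ) :
    matVec (M + N) v = matVec M v + matVec N v := by
  ext i; simp [matVec, add_mul, Finset.sum_add_distrib]

theorem sub_matVec {k : ℕ} (M N : Mat k) (v : Fin k → ℝ) :
    matVec (M - N) v = matVec M v - matVec N v := by
  ext i; simp [matVec, sub_mul]

theorem neg_matVec {k : ℕ} (M : Mat k) (v : Fin k → ℝ) :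
    matVec (-M) v = -matVec M v := by
  ext i; simp [matVec]

theorem zero_matVec {k : ℕ} (v : Fin k → ℝ) : matVec (0 : Mat k) v = 0 := by
  ext i; simp [matVec]

theorem sum_matVec {k n : ℕ} (M : Fin n → Mat k) (v : Fin k → ℝ) :
    matVec (∑ a, M a) v = ∑ a, matVec (M a) v := by
  ext i
  simp only [matVec, Finset.sum_apply, Finset.sum_mul]
  exact Finset.sum_comm

theorem matMul_matVec {k : ℕ} (M N : Mat k) (v : Fin k → ℝ) :
    matVec (matMul M N) v = matVec M (matVec N v) := by
  ext i
  simp only [matVec, matMul, Finset.sum_mul, Finset.mul_sum]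
  rw [Finset.sum_comm]
  simp only [mul_assoc]

theorem smooth_diff {n : ℕ} {E : Type*} [NormedAddCommGroup E] [NormedSpace ℝ E]
    {f : Vec n → E} (hf : ContDiff ℝ (⊤ : ℕ∞) f) : Differentiable ℝ f :=
  hf.differentiable (by simp)

theorem smooth_fderiv {n : ℕ} {E : Type*} [NormedAddCommGroup E] [NormedSpace ℝ E]
    {f : Vec n → E} (hf : ContDiff ℝ (⊤ : ℕ∞) f) : ContDiff ℝ (⊤ : ℕ∞) (fderiv ℝ f) :=
  hf.fderiv_right (m := (⊤ : ℕ∞)) (by simp)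

theorem smooth_pd {n : ℕ} {E : Type*} [NormedAddCommGroup E] [NormedSpace ℝ E]
    (a : Fin n) {f : Vec n → E} (hf : ContDiff ℝ (⊤ : ℕ∞) f) :
    ContDiff ℝ (⊤ : ℕ∞) (fun x => pd a f x) := by
  unfold pd
  exact (smooth_fderiv hf).clm_apply contDiff_const

theorem pd_comm {n : ℕ} {E : Type*} [NormedAddCommGroup E] [NormedSpace ℝ E]
    (a b : Fin n) {f : Vec n → E} (hf : ContDiff ℝ (⊤ : ℕ∞) f) (x : Vec n) :
    pd a (fun y => pd b f y) x = pd b (fun y => pd a f y) x := by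
  have hd : DifferentiableAt ℝ (fderiv ℝ f) x := smooth_diff (smooth_fderiv hf) x
  have hs : IsSymmSndFDerivAt ℝ f x := hf.contDiffAt.isSymmSndFDerivAt (by
    simp only [minSmoothness_of_isRCLikeNormedField]
    exact WithTop.coe_le_coe.2 le_top)
  unfold pd
  rw [fderiv_clm_apply hd (differentiableAt_const _),
    fderiv_clm_apply hd (differentiableAt_const _)]
  simpa using hs.eq (Pi.single a 1) (Pi.single b 1)

theorem pd_add {n : ℕ} {E : Type*} [NormedAddCommGroup E] [NormedSpace ℝ E]
    (a : Fin n) {f g : Vec n → E} (hf : ContDiff ℝ (⊤ : ℕ∞) f) (hg : ContDiff ℝ (⊤ : ℕ∞) g)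
    (x : Vec n) : pd a (fun y => f y + g y) x = pd a f x + pd a g x := by
  unfold pd
  rw [fderiv_fun_add (smooth_diff hf x) (smooth_diff hg x)]; rfl

theorem pd_neg {n : ℕ} {E : Type*} [NormedAddCommGroup E] [NormedSpace ℝ E]
    (a : Fin n) {f : Vec n → E} (x : Vec n) : pd a (fun y => -f y) x = -pd a f x := by
  unfold pd
  rw [fderiv_fun_neg]; rfl

theorem pd_apply {n k : ℕ} {E : Type*} [NormedAddCommGroup E] [NormedSpace ℝ E]
    (a : Fin n) {f : Vec n → Fin k → E} (hf : ContDiff ℝ (⊤ : ℕ∞) f)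
    (x : Vec n) (i : Fin k) : pd a f x i = pd a (fun y => f y i) x := by
  unfold pd
  have h := hasFDerivAt_pi'.1 (smooth_diff hf x).hasFDerivAt i
  rw [h.fderiv]; rfl

theorem smooth_matVec {n k : ℕ} {S : Vec n → Mat k} {φ : Vec n → Fin k → ℝ}
    (hS : ContDiff ℝ (⊤ : ℕ∞) S) (hφ : ContDiff ℝ (⊤ : ℕ∞) φ) :
    ContDiff ℝ (⊤ : ℕ∞) (fun y => matVec (S y) (φ y)) := by
  rw [contDiff_pi]
  intro i
  unfold matVec
  refine ContDiff.sum fun j _ => ?_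
  exact (contDiff_pi.1 (contDiff_pi.1 hS i) j).mul (contDiff_pi.1 hφ j)

theorem smooth_matMul {n k : ℕ} {S T : Vec n → Mat k}
    (hS : ContDiff ℝ (⊤ : ℕ∞) S) (hT : ContDiff ℝ (⊤ : ℕ∞) T) :
    ContDiff ℝ (⊤ : ℕ∞) (fun y => matMul (S y) (T y)) := by
  rw [contDiff_pi]
  intro i
  rw [contDiff_pi]
  intro j
  unfold matMul
  refine ContDiff.sum fun l _ => ?_
  exact (contDiff_pi.1 (contDiff_pi.1 hS i) l).mul (contDiff_pi.1 (contDiff_pi.1 hT l) j)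

theorem pd_matVec {n k : ℕ} (a : Fin n) {S : Vec n → Mat k} {φ : Vec n → Fin k → ℝ}
    (hS : ContDiff ℝ (⊤ : ℕ∞) S) (hφ : ContDiff ℝ (⊤ : ℕ∞) φ) (x : Vec n) :
    pd a (fun y => matVec (S y) (φ y)) x
      = matVec (pd a S x) (φ x) + matVec (S x) (pd a φ x) := by
  ext i
  rw [pd_apply a (smooth_matVec hS hφ)]
  simp only [matVec, Pi.add_apply]
  rw [← Finset.sum_add_distrib]
  unfold pd
  have h1 : ∀ j, DifferentiableAt ℝ (fun y => S y i j) x := fun j =>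
    smooth_diff (contDiff_pi.1 (contDiff_pi.1 hS i) j) x
  have h2 : ∀ j, DifferentiableAt ℝ (fun y => φ y j) x := fun j =>
    smooth_diff (contDiff_pi.1 hφ j) x
  rw [fderiv_fun_sum (fun j _ => (h1 j).fun_mul (h2 j))]
  rw [ContinuousLinearMap.sum_apply]
  refine Finset.sum_congr rfl fun j _ => ?_
  have e1 := pd_apply a hS x i
  have e2 := pd_apply a (contDiff_pi.1 hS i) x j
  have e3 := pd_apply a hφ x j
  unfold pd at e1 e2 e3
  rw [e1, e2, e3, fderiv_fun_mul (h1 j) (h2 j)]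
  simp
  ring

theorem smooth_Dv {n k : ℕ} {A : Fin n → Vec n → Mat k} (hA : ∀ a, ContDiff ℝ (⊤ : ℕ∞) (A a))
    (a : Fin n) {φ : Vec n → Fin k → ℝ} (hφ : ContDiff ℝ (⊤ : ℕ∞) φ) :
    ContDiff ℝ (⊤ : ℕ∞) (fun y => Dv A a φ y) :=
  (smooth_pd a hφ).add (smooth_matVec (hA a) hφ)

theorem smooth_curv {n k : ℕ} {A : Fin n → Vec n → Mat k}
    (hA : ∀ a, ContDiff ℝ (⊤ : ℕ∞) (A a)) (a b : Fin n) :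
    ContDiff ℝ (⊤ : ℕ∞) (curv A a b) :=
  (((smooth_pd a (hA b)).sub (smooth_pd b (hA a))).add (smooth_matMul (hA a) (hA b))).sub
    (smooth_matMul (hA b) (hA a))

theorem curv_anti {n k : ℕ} (A : Fin n → Vec n → Mat k) (a b : Fin n) (x : Vec n) :
    curv A a b x = -curv A b a x := by
  unfold curv; abel

theorem Dv_add {n k : ℕ} (A : Fin n → Vec n → Mat k) (a : Fin n) {φ χ : Vec n → Fin k → ℝ}
    (hφ : ContDiff ℝ (⊤ : ℕ∞) φ) (hχ : ContDiff ℝ (⊤ : ℕ∞) χ) (x : Vec n) :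
    Dv A a (fun y => φ y + χ y) x = Dv A a φ x + Dv A a χ x := by
  unfold Dv
  rw [pd_add a hφ hχ, matVec_add]; abel

theorem Dv_neg {n k : ℕ} (A : Fin n → Vec n → Mat k) (a : Fin n) (φ : Vec n → Fin k → ℝ)
    (x : Vec n) : Dv A a (fun y => -φ y) x = -Dv A a φ x := by
  unfold Dv
  rw [pd_neg a, matVec_neg]; abel

theorem Dv_sub {n k : ℕ} (A : Fin n → Vec n → Mat k) (a : Fin n) {φ χ : Vec n → Fin k → ℝ}
    (hφ : ContDiff ℝ (⊤ : ℕ∞) φ) (hχ : ContDiff ℝ (⊤ : ℕ∞) χ) (x : Vec n) :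
    Dv A a (fun y => φ y - χ y) x = Dv A a φ x - Dv A a χ x := by
  simp only [sub_eq_add_neg]
  rw [Dv_add A a hφ hχ.neg, Dv_neg]

theorem Dv_zero {n k : ℕ} (A : Fin n → Vec n → Mat k) (a : Fin n) (x : Vec n) :
    Dv A a (fun _ => 0) x = 0 := by
  simp [Dv, pd, matVec_zero]

theorem Dv_sum {n k : ℕ} (A : Fin n → Vec n → Mat k) (a : Fin n) {ι : Type*} (s : Finset ι)
    {φ : ι → Vec n → Fin k → ℝ}
    (hφ : ∀ i, ContDiff ℝ (⊤ : ℕ∞) (φ i)) (x : Vec n) :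
    Dv A a (fun y => ∑ i ∈ s, φ i y) x = ∑ i ∈ s, Dv A a (φ i) x := by
  classical
  induction s using Finset.induction_on with
  | empty => simpa using Dv_zero A a x
  | insert i s hi ih =>
    simp only [Finset.sum_insert hi]
    rw [Dv_add A a (hφ i) (ContDiff.sum fun j _ => hφ j), ih]

theorem Dv_matVec {n k : ℕ} (A : Fin n → Vec n → Mat k) (a : Fin n) {S : Vec n → Mat k}
    {φ : Vec n → Fin k → ℝ} (hS : ContDiff ℝ (⊤ : ℕ∞) S) (hφ : ContDiff ℝ (⊤ : ℕ∞) φ)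
    (x : Vec n) :
    Dv A a (fun y => matVec (S y) (φ y)) x
      = matVec (Dm A a S x) (φ x) + matVec (S x) (Dv A a φ x) := by
  unfold Dv Dm
  rw [pd_matVec a hS hφ, sub_matVec, add_matVec, matMul_matVec, matMul_matVec, matVec_add]
  abel

theorem Dv_comm {n k : ℕ} {A : Fin n → Vec n → Mat k} (hA : ∀ a, ContDiff ℝ (⊤ : ℕ∞) (A a))
    (a b : Fin n) {φ : Vec n → Fin k → ℝ} (hφ : ContDiff ℝ (⊤ : ℕ∞) φ) (x : Vec n) :
    Dv A a (fun y => Dv A b φ y) x - Dv A b (fun y => Dv A a φ y) x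
      = matVec (curv A a b x) (φ x) := by
  have key : ∀ a b : Fin n, Dv A a (fun y => Dv A b φ y) x
      = pd a (fun y => pd b φ y) x + (matVec (pd a (A b) x) (φ x) + matVec (A b x) (pd a φ x))
        + (matVec (A a x) (pd b φ x) + matVec (A a x) (matVec (A b x) (φ x))) := by
    intro a b
    unfold Dv
    rw [pd_add a (smooth_pd b hφ) (smooth_matVec (hA b) hφ), pd_matVec a (hA b) hφ, matVec_add]
  rw [key a b, key b a, pd_comm a b hφ]
  unfold curv
  rw [sub_matVec, add_matVec, sub_matVec, matMul_matVec, matMul_matVec]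
  abel

theorem MD_D {n k : ℕ} {A : Fin n → Vec n → Mat k} (hA : ∀ a, ContDiff ℝ (⊤ : ℕ∞) (A a))
    {Φ : Vec n → Fin k → ℝ} (hΦ : ContDiff ℝ (⊤ : ℕ∞) Φ) (b : Fin n) (x : Vec n) :
    MD A (fun a => Dv A a Φ) b x = -matVec (∑ a, Dm A a (curv A a b) x) (Φ x) := by
  unfold MD
  have h : ∀ a : Fin n, Dv A a (fun y => Dv A a (Dv A b Φ) y - Dv A b (Dv A a Φ) y) x
      = matVec (Dm A a (curv A a b) x) (Φ x) - matVec (curv A b a x) (Dv A a Φ x) := by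
    intro a
    have : (fun y => Dv A a (Dv A b Φ) y - Dv A b (Dv A a Φ) y)
        = fun y => matVec (curv A a b y) (Φ y) := by
      funext y; exact Dv_comm hA a b hΦ y
    rw [this, Dv_matVec A a (smooth_curv hA a b) hΦ, curv_anti A a b x, neg_matVec]
    abel
  rw [Finset.sum_congr rfl fun a _ => h a, Finset.sum_sub_distrib, sum_matVec]
  abel

theorem D_MD {n k : ℕ} {A : Fin n → Vec n → Mat k} (hA : ∀ a, ContDiff ℝ (⊤ : ℕ∞) (A a))
    {ψ : Fin n → Vec n → Fin k → ℝ} (hψ : ∀ a, ContDiff ℝ (⊤ : ℕ∞) (ψ a)) (x : Vec n) :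
    ∑ b, Dv A b (fun y => MD A ψ b y) x
      = -∑ b, matVec (∑ a, Dm A a (curv A a b) x) (ψ b x) := by
  set W : Fin n → Fin n → Vec n → Fin k → ℝ :=
    fun a b y => Dv A a (ψ b) y - Dv A b (ψ a) y with hW
  have sW : ∀ a b, ContDiff ℝ (⊤ : ℕ∞) (W a b) := fun a b =>
    (smooth_Dv hA a (hψ b)).sub (smooth_Dv hA b (hψ a))
  have sF : ∀ a b, ContDiff ℝ (⊤ : ℕ∞) (fun y => matVec (curv A b a y) (ψ a y)) := fun a b =>
    smooth_matVec (smooth_curv hA b a) (hψ a)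
  have h1 : ∀ b, Dv A b (fun y => MD A ψ b y) x
      = -(∑ a, Dv A b (fun y => Dv A a (W a b) y) x)
        - ∑ a, (matVec (Dm A b (curv A b a) x) (ψ a x)
          + matVec (curv A b a x) (Dv A b (ψ a) x)) := by
    intro b
    have s1 : ContDiff ℝ (⊤ : ℕ∞) (fun y => ∑ a, Dv A a (W a b) y) :=
      ContDiff.sum fun a _ => smooth_Dv hA a (sW a b)
    have s2 : ContDiff ℝ (⊤ : ℕ∞) (fun y => ∑ a, matVec (curv A b a y) (ψ a y)) :=
      ContDiff.sum fun a _ => sF a b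
    have e : (fun y => MD A ψ b y)
      = fun y => -(∑ a, Dv A a (W a b) y) - ∑ a, matVec (curv A b a y) (ψ a y) := rfl
    rw [e, Dv_sub A b s1.neg s2, Dv_neg, Dv_sum A b _ (fun a => smooth_Dv hA a (sW a b)),
      Dv_sum A b _ (fun a => sF a b)]
    congr 1
    exact Finset.sum_congr rfl fun a _ => Dv_matVec A b (smooth_curv hA b a) (hψ a) x
  have anti : ∀ a b, W a b = fun y => -W b a y := by
    intro a b; funext y; simp [hW]
  -- the double sum of second derivatives
  set P : Fin k → ℝ := ∑ b, ∑ a, Dv A b (fun y => Dv A a (W a b) y) x with hP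
  set Q : Fin k → ℝ := ∑ b, ∑ a, matVec (curv A b a x) (Dv A b (ψ a) x) with hQ
  have hP2 : P = -∑ b, ∑ a, Dv A a (fun y => Dv A b (W a b) y) x := by
    rw [hP, Finset.sum_comm, ← Finset.sum_neg_distrib]
    refine Finset.sum_congr rfl fun b _ => ?_
    rw [← Finset.sum_neg_distrib]
    refine Finset.sum_congr rfl fun a _ => ?_
    rw [← Dv_neg]
    congr 1
    funext y
    rw [anti b a, Dv_neg]
  have hQ2 : Q = -∑ b, ∑ a, matVec (curv A b a x) (Dv A a (ψ b) x) := by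
    rw [hQ, Finset.sum_comm, ← Finset.sum_neg_distrib]
    refine Finset.sum_congr rfl fun b _ => ?_
    rw [← Finset.sum_neg_distrib]
    refine Finset.sum_congr rfl fun a _ => ?_
    rw [curv_anti A a b x, neg_matVec]
  have hPQ : P + P = -(Q + Q) := by
    have : P + P = ∑ b, ∑ a, matVec (curv A b a x) (W a b x) := by
      nth_rewrite 2 [hP2]
      rw [hP, ← sub_eq_add_neg, ← Finset.sum_sub_distrib]
      refine Finset.sum_congr rfl fun b _ => ?_
      rw [← Finset.sum_sub_distrib]
      exact Finset.sum_congr rfl fun a _ => Dv_comm hA b a (sW a b) x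
    rw [this]
    nth_rewrite 1 [hQ2]
    rw [hQ]
    simp only [hW, matVec_sub, Finset.sum_sub_distrib]
    abel
  have hPQ' : P = -Q := by
    ext i
    have := congrFun hPQ i
    simp only [Pi.add_apply, Pi.neg_apply] at this ⊢
    linarith
  rw [Finset.sum_congr rfl fun b _ => h1 b]
  simp only [Finset.sum_sub_distrib, Finset.sum_add_distrib, Finset.sum_neg_distrib]
  rw [← hP, ← hQ, hPQ']
  simp only [sum_matVec]
  rw [Finset.sum_comm]
  abel

/-- Flat-chart form of the main assertion of Theorem 3.2: the sequence
`E⁰ → E¹ → E₁ → E₀` given by `d^D`, `M^D`, `δ^D` is a complex if and only if the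
connection form `A` satisfies the Yang–Mills equation `Σ_a D_a F_{ab} = 0`. -/
theorem yangMills_detour_complex_iff (n k : ℕ) (hn : 1 ≤ n) (hk : 1 ≤ k)
    (A : Fin n → Vec n → Mat k) (hA : ∀ a, ContDiff ℝ (⊤ : ℕ∞) (A a)) :
    ((∀ Φ : Vec n → Fin k → ℝ, ContDiff ℝ (⊤ : ℕ∞) Φ →
        ∀ (b : Fin n) (x : Vec n), MD A (fun a => Dv A a Φ) b x = 0) ∧
     (∀ ψ : Fin n → Vec n → Fin k → ℝ, (∀ a, ContDiff ℝ (⊤ : ℕ∞) (ψ a)) →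
        ∀ x : Vec n, ∑ b, Dv A b (fun y => MD A ψ b y) x = 0))
    ↔ (∀ (b : Fin n) (x : Vec n), ∑ a, Dm A a (curv A a b) x = 0) := by
  constructor
  · rintro ⟨h, -⟩ b x
    have key : ∀ v : Fin k → ℝ, matVec (∑ a, Dm A a (curv A a b) x) v = 0 := by
      intro v
      have h0 := h (fun _ => v) contDiff_const b x
      rw [MD_D hA contDiff_const] at h0
      simpa using h0
    ext i j
    have := congrFun (key (Pi.single j 1)) i
    simpa [matVec, Pi.single_apply] using this
  · intro h
    refine ⟨fun Φ hΦ b x => ?_, fun ψ hψ x => ?_⟩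
    · rw [MD_D hA hΦ, h b x, zero_matVec, neg_zero]
    · rw [D_MD hA hψ]
      simp [h, zero_matVec]
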